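/- For every integer m > 1, the sum over k from 1 to ⌊m/2⌋ of (log(2 sin(πk/m)))² is strictly less than (π²/24)·m + (log 2)². -/

import Mathlib

open Real Finset

open MeasureTheory

/-!
The function `log |2 sin x|` on `(-π/2, π/2)` has mean `0` and `n`-th Fourier coefficient
`-1 / (2|n|)` for `n ≠ 0`, so by Parseval and `ζ(2) = π² / 6` the integral of its square over
`(0, π/2)` is `π³ / 24`. The coefficients come from a recursion: integrating the derivative of
`2 sin x · log (2 sin x) · cos ((2n + 1) x)`, which vanishes at both ends of `[0, π/2]`, relates
the cosine coefficients of indices `n` and `n + 1`.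

To compare the sum with the integral for an increasing `g`, write `g² = (g⁻)² + (g⁺)²`. The first
summand is decreasing, so its value at a grid point is at most its mean over the cell to the left;
the second is increasing, so its value is at most its mean over the cell to the right. The cells
exhaust the range of integration, and only the last value of `(g⁺)²` is left over; here it is at
most `(log 2)²`.
-/

section OrderedRing

variable {R : Type*} [CommRing R] [LinearOrder R] [IsStrictOrderedRing R] {x y z : R}

theorem sq_negPart_add_sq_posPart (x : R) : x⁻ ^ 2 + x⁺ ^ 2 = x ^ 2 := by
  rcases le_total x 0 with hx | hx
  · simp [negPart_eq_neg.2 hx, posPart_eq_zero.2 hx]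
  · simp [negPart_eq_zero.2 hx, posPart_eq_self.2 hx]

theorem sq_negPart_add_sq_posPart_le (hxy : x ≤ y) (hyz : y ≤ z) : z⁻ ^ 2 + x⁺ ^ 2 ≤ y ^ 2 := by
  rw [← sq_negPart_add_sq_posPart y]
  exact add_le_add (pow_le_pow_left₀ (negPart_nonneg z) (negPart_anti hyz) 2)
    (pow_le_pow_left₀ (posPart_nonneg x) (posPart_mono hxy) 2)

theorem sq_negPart_lt_sq (hy : y ≠ 0) (hyz : y < z) : z⁻ ^ 2 < y ^ 2 := by
  rcases hy.lt_or_gt with hy | hy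
  · rw [← neg_sq y]
    exact pow_lt_pow_left₀ (negPart_lt.2 ⟨by rwa [neg_neg], neg_pos.2 hy⟩) (negPart_nonneg z)
      two_ne_zero
  · rw [negPart_eq_zero.2 (hy.trans hyz).le, zero_pow two_ne_zero]
    positivity

end OrderedRing

theorem sq_negPart_add_sq_posPart_le_integral_sq_of_monotoneOn {g : ℝ → ℝ} {a b : ℝ} (hab : a ≤ b)
    (hg : MonotoneOn g (Set.Icc a b)) (hg_int : IntervalIntegrable (fun t ↦ g t ^ 2) volume a b) :
    (b - a) * ((g b)⁻ ^ 2 + (g a)⁺ ^ 2) ≤ ∫ t in a..b, g t ^ 2 := by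
  calc (b - a) * ((g b)⁻ ^ 2 + (g a)⁺ ^ 2)
      = ∫ _ in a..b, ((g b)⁻ ^ 2 + (g a)⁺ ^ 2) := by
        rw [intervalIntegral.integral_const, smul_eq_mul]
    _ ≤ ∫ t in a..b, g t ^ 2 :=
      intervalIntegral.integral_mono_on hab intervalIntegrable_const hg_int fun t ht ↦
        sq_negPart_add_sq_posPart_le (hg (Set.left_mem_Icc.2 hab) ht ht.1)
          (hg ht (Set.right_mem_Icc.2 hab) ht.2)

theorem sq_negPart_lt_integral_sq_of_strictMonoOn {g : ℝ → ℝ} {a b : ℝ} (hab : a < b)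
    (hg : StrictMonoOn g (Set.Ioc a b)) (hg_int : IntervalIntegrable (fun t ↦ g t ^ 2) volume a b) :
    (b - a) * (g b)⁻ ^ 2 < ∫ t in a..b, g t ^ 2 := by
  have hle : ∀ t ∈ Set.Ioc a b, (g b)⁻ ^ 2 ≤ g t ^ 2 := fun t ht ↦ by
    have hsplit := sq_negPart_add_sq_posPart_le le_rfl
      (hg.monotoneOn ht (Set.right_mem_Ioc.2 hab) ht.2)
    exact le_of_add_le_of_nonneg_left hsplit (sq_nonneg _)
  have hzero : (Set.Ioo a b ∩ {t | g t = 0}).Subsingleton := fun s hs t ht ↦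
    hg.injOn (Set.Ioo_subset_Ioc_self hs.1) (Set.Ioo_subset_Ioc_self ht.1) (hs.2.trans ht.2.symm)
  have hpos : volume.restrict (Set.Ioc a b) {t | (g b)⁻ ^ 2 < g t ^ 2} ≠ 0 := by
    have hsub : Set.Ioo a b \ (Set.Ioo a b ∩ {t | g t = 0}) ⊆
        {t | (g b)⁻ ^ 2 < g t ^ 2} ∩ Set.Ioc a b := fun t ⟨ht, hgt⟩ ↦
      ⟨sq_negPart_lt_sq (fun h ↦ hgt ⟨ht, h⟩)
        (hg (Set.Ioo_subset_Ioc_self ht) (Set.right_mem_Ioc.2 hab) ht.2),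
        Set.Ioo_subset_Ioc_self ht⟩
    rw [Measure.restrict_apply' measurableSet_Ioc]
    refine ((?_ : 0 < volume (Set.Ioo a b \ _)).trans_le (measure_mono hsub)).ne'
    rw [measure_sdiff_null (hzero.measure_zero volume)]
    exact (Measure.measure_Ioo_pos _).2 hab
  calc (b - a) * (g b)⁻ ^ 2 = ∫ _ in a..b, (g b)⁻ ^ 2 := by simp
    _ < ∫ t in a..b, g t ^ 2 :=
      intervalIntegral.integral_lt_integral_of_ae_le_of_measure_setOfPred_lt_ne_zero hab.le
        intervalIntegrable_const hg_int ((ae_restrict_mem measurableSet_Ioc).mono hle) hpos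

theorem sum_sq_lt_integral_sq_add_of_strictMonoOn {g : ℝ → ℝ} {N : ℕ} (hN : 1 ≤ N)
    (hg : StrictMonoOn g (Set.Ioc 0 N))
    (hg_int : IntervalIntegrable (fun t ↦ g t ^ 2) volume 0 N) :
    ∑ k ∈ Icc 1 N, g k ^ 2 < (∫ t in 0..N, g t ^ 2) + (g N)⁺ ^ 2 := by
  induction N, hN using Nat.le_induction with
  | base =>
    simpa [← sq_negPart_add_sq_posPart (g 1)] using
      sq_negPart_lt_integral_sq_of_strictMonoOn (by simp) hg hg_int
  | succ N hN ih =>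
    have hN' : (0 : ℝ) < N := by exact_mod_cast hN
    push_cast at hg hg_int ⊢
    have hmem : (N : ℝ) ∈ Set.uIcc 0 ((N : ℝ) + 1) := Set.mem_uIcc_of_le hN'.le (by simp)
    have hg_int₀ := hg_int.mono_set (Set.uIcc_subset_uIcc_left hmem)
    have hg_int₁ := hg_int.mono_set (Set.uIcc_subset_uIcc_right hmem)
    have hsum := ih (hg.mono (Set.Ioc_subset_Ioc_right (by simp))) hg_int₀
    have hstep := sq_negPart_add_sq_posPart_le_integral_sq_of_monotoneOn (by simp)
      (hg.monotoneOn.mono fun t ht ↦ ⟨hN'.trans_le ht.1, ht.2⟩) hg_int₁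
    rw [sum_Icc_succ_top (by simp), Nat.cast_succ,
      ← intervalIntegral.integral_add_adjacent_intervals hg_int₀ hg_int₁,
      ← sq_negPart_add_sq_posPart (g (N + 1))]
    linarith

theorem sum_sq_lt_inv_mul_integral_sq_add_of_strictMonoOn {g : ℝ → ℝ} {h : ℝ} (hh : 0 < h)
    {N : ℕ} (hN : 1 ≤ N) (hg : StrictMonoOn g (Set.Ioc 0 (h * N)))
    (hg_int : IntervalIntegrable (fun x ↦ g x ^ 2) volume 0 (h * N)) :
    ∑ k ∈ Icc 1 N, g (h * k) ^ 2 < h⁻¹ * (∫ x in 0..h * N, g x ^ 2) + (g (h * N))⁺ ^ 2 := by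
  have hmono : StrictMonoOn (fun t ↦ g (h * t)) (Set.Ioc 0 N) :=
    hg.comp ((strictMono_mul_left_of_pos hh).strictMonoOn _) fun t ht ↦
      ⟨mul_pos hh ht.1, mul_le_mul_of_nonneg_left ht.2 hh.le⟩
  have hscaled_int : IntervalIntegrable (fun t ↦ g (h * t) ^ 2) volume 0 N := by
    simpa only [zero_div, mul_div_cancel_left₀ _ hh.ne'] using hg_int.comp_mul_left (c := h)
  have hsubst : ∫ t in (0 : ℝ)..N, g (h * t) ^ 2 = h⁻¹ * ∫ x in 0..h * N, g x ^ 2 := by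
    rw [intervalIntegral.integral_comp_mul_left (fun x ↦ g x ^ 2) hh.ne', mul_zero, smul_eq_mul]
  rw [← hsubst]
  exact sum_sq_lt_integral_sq_add_of_strictMonoOn hN hmono hscaled_int

theorem integral_neg_self_eq_integral_add {E : Type*} [NormedAddCommGroup E] [NormedSpace ℝ E]
    {f : ℝ → E} {a : ℝ} (hf : IntervalIntegrable f volume (-a) a) :
    ∫ x in -a..a, f x = ∫ x in 0..a, (f (-x) + f x) := by
  have hzero : (0 : ℝ) ∈ Set.uIcc (-a) a := by
    rcases le_total 0 a with ha | ha
    · exact Set.mem_uIcc_of_le (neg_nonpos.2 ha) ha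
    · exact Set.mem_uIcc_of_ge ha (neg_nonneg.2 ha)
  have hneg : IntervalIntegrable f volume (-a) 0 :=
    hf.mono_set (Set.uIcc_subset_uIcc_left hzero)
  have hpos : IntervalIntegrable f volume 0 a :=
    hf.mono_set (Set.uIcc_subset_uIcc_right hzero)
  have hcomp : IntervalIntegrable (fun x ↦ f (-x)) volume 0 a := by
    simpa using ((IntervalIntegrable.iff_comp_neg (by finiteness)).1 hneg).symm
  rw [intervalIntegral.integral_add hcomp hpos, intervalIntegral.integral_comp_neg, neg_zero,
    intervalIntegral.integral_add_adjacent_intervals hneg hpos]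

theorem fourier_coe_neg_add_fourier_coe (T : ℝ) (n : ℤ) (x : ℝ) :
    fourier n ((-x : ℝ) : AddCircle T) + fourier n (x : AddCircle T) =
      ((2 * cos (2 * π * n / T * x) : ℝ) : ℂ) := by
  rw [fourier_coe_apply, fourier_coe_apply, add_comm]
  push_cast
  rw [Complex.cos, mul_div_cancel₀ _ two_ne_zero]
  congr 2 <;> ring

theorem fourierCoeffOn_ofReal_of_even {f : ℝ → ℝ} {a : ℝ} (ha : 0 < a) (hf : ∀ x, f (-x) = f x)
    (hf_int : IntervalIntegrable f volume (-a) a) (n : ℤ) :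
    fourierCoeffOn (neg_lt_self ha) (fun x ↦ (f x : ℂ)) n =
      ((a⁻¹ * ∫ x in 0..a, f x * cos (π * n / a * x) : ℝ) : ℂ) := by
  have hmul_int : IntervalIntegrable (fun x ↦ fourier (-n) (x : AddCircle (a - -a)) • (f x : ℂ))
      volume (-a) a := by
    have hcont : Continuous fun x : ℝ ↦ fourier (-n) (x : AddCircle (a - -a)) := by fun_prop
    have hcoe : IntervalIntegrable (fun x ↦ (f x : ℂ)) volume (-a) a :=
      ⟨hf_int.1.ofReal, hf_int.2.ofReal⟩
    exact hcoe.continuousOn_smul hcont.continuousOn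
  have hcos (x : ℝ) : cos (2 * π * (-n : ℤ) / (a - -a) * x) = cos (π * n / a * x) := by
    rw [← cos_neg, sub_neg_eq_add, ← two_mul, mul_assoc, mul_div_mul_left _ _ two_ne_zero]
    push_cast
    ring_nf
  have hfold (x : ℝ) : fourier (-n) ((-x : ℝ) : AddCircle (a - -a)) • (f (-x) : ℂ)
      + fourier (-n) (x : AddCircle (a - -a)) • (f x : ℂ)
      = ((2 * (f x * cos (π * n / a * x)) : ℝ) : ℂ) := by
    rw [hf, ← add_smul, fourier_coe_neg_add_fourier_coe, hcos, smul_eq_mul, ← Complex.ofReal_mul,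
      mul_assoc, mul_comm (cos _)]
  rw [fourierCoeffOn_eq_integral, integral_neg_self_eq_integral_add hmul_int]
  simp_rw [hfold]
  have hlength : 1 / (a - -a) * 2 = a⁻¹ := by
    rw [sub_neg_eq_add, ← two_mul]
    field_simp
  rw [intervalIntegral.integral_ofReal, intervalIntegral.integral_const_mul, Complex.real_smul,
    ← Complex.ofReal_mul, ← mul_assoc, hlength]

theorem intervalIntegrable_log_sq (a b : ℝ) :
    IntervalIntegrable (fun x ↦ log x ^ 2) volume a b := by
  refine intervalIntegrable_of_even (by simp) fun x hx ↦ ?_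
  -- For continuity at `0`, use `t * log t ^ 2 = 4 * (√t * log √t) ^ 2`.
  have hcont : ContinuousOn (fun t ↦ t * log t ^ 2 - 2 * (t * log t) + 2 * t) (Set.uIcc 0 x) := by
    have hsqrt : Continuous fun t ↦ 4 * (√t * log √t) ^ 2 - 2 * (t * log t) + 2 * t :=
      ((continuous_const.mul ((continuous_mul_log.comp continuous_sqrt).pow 2)).sub
        (continuous_const.mul continuous_mul_log)).add (by fun_prop)
    refine hsqrt.continuousOn.congr fun t ht ↦ ?_
    have ht0 : 0 ≤ t := (Set.uIcc_of_le hx.le ▸ ht).1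
    simp only [mul_pow, sq_sqrt ht0, log_sqrt ht0]
    ring
  refine intervalIntegral.intervalIntegrable_deriv_of_nonneg hcont (fun t ht ↦ ?_)
    fun _ _ ↦ sq_nonneg _
  have ht0 : t ≠ 0 := ((min_eq_left hx.le).symm.trans_lt ht.1).ne'
  refine ((((hasDerivAt_id' t).mul ((hasDerivAt_log ht0).pow 2)).sub
    ((hasDerivAt_mul_log ht0).const_mul 2)).add ((hasDerivAt_id' t).const_mul 2)).congr_deriv ?_
  simp only [Pi.pow_apply]
  field_simp
  ring

theorem log_two_mul_sin_neg (x : ℝ) : log (2 * sin (-x)) = log (2 * sin x) := by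
  rw [sin_neg, mul_neg, log_neg_eq_log]

theorem log_two_mul_sin_le_log_two (x : ℝ) : log (2 * sin x) ≤ log 2 := by
  rcases eq_or_ne (sin x) 0 with h | h
  · simpa [h] using log_nonneg one_le_two
  · rw [← log_abs, abs_mul, abs_two]
    exact log_le_log (by positivity) (by linarith [abs_sin_le_one x])

theorem log_two_mul_sin_sq_le {x : ℝ} (hx0 : x ≠ 0) (hx : |x| ≤ π / 2) :
    log (2 * sin x) ^ 2 ≤ log 2 ^ 2 + log (4 / π * x) ^ 2 := by
  have hlow : |4 / π * x| ≤ |2 * sin x| := by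
    rw [abs_mul, abs_mul, abs_two, abs_of_pos (by positivity : 0 < 4 / π)]
    linear_combination 2 * mul_abs_le_abs_sin hx
  have hpos : 0 < |4 / π * x| := by positivity
  have h₁ : log (4 / π * x) ≤ log (2 * sin x) := by
    simpa only [log_abs] using log_le_log hpos hlow
  have h₂ := log_two_mul_sin_le_log_two x
  rcases le_total (log (2 * sin x)) 0 with h | h
  · exact le_add_of_nonneg_of_le (sq_nonneg _) (sq_le_sq.2 (abs_le_abs_of_nonpos h h₁))
  · exact le_add_of_le_of_nonneg (pow_le_pow_left₀ h h₂ 2) (sq_nonneg _)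

theorem intervalIntegrable_log_two_mul_sin_sq :
    IntervalIntegrable (fun x ↦ log (2 * sin x) ^ 2) volume (-(π / 2)) (π / 2) := by
  have hdom : IntervalIntegrable (fun x ↦ log 2 ^ 2 + log (4 / π * x) ^ 2) volume
      (-(π / 2)) (π / 2) :=
    intervalIntegrable_const.add <| by
      convert (intervalIntegrable_log_sq (-2) 2).comp_mul_left (c := 4 / π) using 1 <;>
        field_simp <;> norm_num
  refine hdom.mono_fun' (by fun_prop : Measurable _).aestronglyMeasurable ?_
  rw [Set.uIoc_of_le (by linarith [pi_pos])]
  filter_upwards [ae_restrict_mem measurableSet_Ioc,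
    ae_restrict_of_ae (Measure.ae_ne volume (0 : ℝ))] with x hx hx0
  rw [norm_of_nonneg (sq_nonneg _)]
  exact log_two_mul_sin_sq_le hx0 (abs_le.2 ⟨hx.1.le, hx.2⟩)

theorem intervalIntegrable_log_two_mul_sin_sq_zero_left {a : ℝ} (ha0 : 0 ≤ a) (ha : a ≤ π / 2) :
    IntervalIntegrable (fun x ↦ log (2 * sin x) ^ 2) volume 0 a :=
  intervalIntegrable_log_two_mul_sin_sq.mono_set <| Set.uIcc_subset_uIcc
    (Set.mem_uIcc_of_le (by linarith) (by linarith)) (Set.mem_uIcc_of_le (by linarith) ha)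

theorem memLp_log_two_mul_sin :
    MemLp (fun x ↦ log (2 * sin x)) 2 (volume.restrict (Set.Ioc (-(π / 2)) (π / 2))) :=
  (memLp_two_iff_integrable_sq (by fun_prop : Measurable _).aestronglyMeasurable).2
    intervalIntegrable_log_two_mul_sin_sq.1

theorem intervalIntegrable_log_two_mul_sin :
    IntervalIntegrable (fun x ↦ log (2 * sin x)) volume (-(π / 2)) (π / 2) :=
  (intervalIntegrable_iff_integrableOn_Ioc_of_le (by linarith [pi_pos])).2
    (memLp_log_two_mul_sin.integrable one_le_two)

theorem integral_log_two_mul_sin : ∫ x in 0..π / 2, log (2 * sin x) = 0 := by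
  have hcongr : ∫ x in 0..π / 2, log (2 * sin x) = ∫ x in 0..π / 2, (log 2 + log (sin x)) := by
    refine intervalIntegral.integral_congr_Ioo_of_le (by positivity) fun x hx ↦ ?_
    exact log_mul two_ne_zero (sin_pos_of_pos_of_lt_pi hx.1 (by linarith [hx.2, pi_pos])).ne'
  have hlogsin : IntervalIntegrable (fun x ↦ log (sin x)) volume 0 (π / 2) :=
    intervalIntegrable_log_sin
  rw [hcongr, intervalIntegral.integral_add intervalIntegrable_const hlogsin,
    integral_log_sin_zero_pi_div_two, intervalIntegral.integral_const, smul_eq_mul]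
  ring

theorem hasDerivAt_two_mul_sin_mul_log_mul_cos (n : ℝ) {x : ℝ} (hx : sin x ≠ 0) :
    HasDerivAt (fun t ↦ 2 * sin t * log (2 * sin t) * cos ((2 * n + 1) * t))
      (2 * (n + 1) * (log (2 * sin x) * cos (2 * (n + 1) * x))
        - 2 * n * (log (2 * sin x) * cos (2 * n * x))
        + (cos (2 * (n + 1) * x) + cos (2 * n * x))) x := by
  have hlog : HasDerivAt (fun t ↦ 2 * sin t * log (2 * sin t))
      ((log (2 * sin x) + 1) * (2 * cos x)) x :=
    (hasDerivAt_mul_log (by simpa using hx)).comp x ((hasDerivAt_sin x).const_mul 2)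
  have hcos : HasDerivAt (fun t ↦ cos ((2 * n + 1) * t))
      (-sin ((2 * n + 1) * x) * (2 * n + 1)) x := by
    simpa using ((hasDerivAt_id x).const_mul (2 * n + 1)).cos
  refine (hlog.mul hcos).congr_deriv ?_
  have hsucc : cos (2 * (n + 1) * x) =
      cos ((2 * n + 1) * x) * cos x - sin ((2 * n + 1) * x) * sin x := by
    rw [← cos_add]
    ring_nf
  have hself : cos (2 * n * x) =
      cos ((2 * n + 1) * x) * cos x + sin ((2 * n + 1) * x) * sin x := by
    rw [← cos_sub]
    ring_nf
  rw [hsucc, hself]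
  ring

theorem integral_cos_two_mul_nat_mul (n : ℕ) :
    ∫ x in 0..π / 2, cos (2 * n * x) = if n = 0 then π / 2 else 0 := by
  split_ifs with hn
  · simp [hn]
  · rw [intervalIntegral.integral_comp_mul_left (fun x ↦ cos x) (by positivity), integral_cos]
    have hsin : sin (2 * n * (π / 2)) = 0 := by
      rw [← sin_nat_mul_pi n]
      ring_nf
    simp [hsin]

theorem intervalIntegrable_log_two_mul_sin_mul_cos (c : ℝ) :
    IntervalIntegrable (fun x ↦ log (2 * sin x) * cos (c * x)) volume 0 (π / 2) :=
  (intervalIntegrable_log_two_mul_sin.mono_set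
    (Set.uIcc_subset_uIcc_right (Set.mem_uIcc_of_le (by linarith [pi_pos]) (by positivity)))
    ).mul_continuousOn (by fun_prop)

theorem succ_mul_integral_log_two_mul_sin_mul_cos (n : ℕ) :
    (n + 1) * ∫ x in 0..π / 2, log (2 * sin x) * cos (2 * (n + 1) * x) =
      n * (∫ x in 0..π / 2, log (2 * sin x) * cos (2 * n * x)) - if n = 0 then π / 4 else 0 := by
  have hlogcos (b c : ℝ) :
      IntervalIntegrable (fun x ↦ b * (log (2 * sin x) * cos (c * x))) volume 0 (π / 2) :=
    (intervalIntegrable_log_two_mul_sin_mul_cos c).const_mul b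
  have hcos (c : ℝ) : IntervalIntegrable (fun x ↦ cos (c * x)) volume 0 (π / 2) :=
    Continuous.intervalIntegrable (by fun_prop) _ _
  have hcont : Continuous fun t ↦ 2 * sin t * log (2 * sin t) * cos ((2 * n + 1) * t) :=
    (continuous_mul_log.comp (by fun_prop : Continuous fun t ↦ 2 * sin t)).mul (by fun_prop)
  have hend : cos ((2 * n + 1) * (π / 2)) = 0 :=
    cos_eq_zero_iff.2 ⟨n, by push_cast; ring⟩
  have hftc := intervalIntegral.integral_eq_sub_of_hasDerivAt_of_le (by positivity)
    hcont.continuousOn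
    (fun x hx ↦ hasDerivAt_two_mul_sin_mul_log_mul_cos n
      (sin_pos_of_pos_of_lt_pi hx.1 (by linarith [hx.2, pi_pos])).ne')
    (((hlogcos _ _).sub (hlogcos _ _)).add ((hcos _).add (hcos _)))
  have hcos_succ : ∫ x in 0..π / 2, cos (2 * ((n : ℝ) + 1) * x) = 0 := by
    simpa using integral_cos_two_mul_nat_mul (n + 1)
  rw [intervalIntegral.integral_add ((hlogcos _ _).sub (hlogcos _ _)) ((hcos _).add (hcos _)),
    intervalIntegral.integral_sub (hlogcos _ _) (hlogcos _ _),
    intervalIntegral.integral_add (hcos _) (hcos _), intervalIntegral.integral_const_mul,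
    intervalIntegral.integral_const_mul, integral_cos_two_mul_nat_mul, hcos_succ, hend,
    sin_zero] at hftc
  split_ifs at hftc ⊢ <;> linarith

theorem integral_log_two_mul_sin_mul_cos {n : ℕ} (hn : n ≠ 0) :
    ∫ x in 0..π / 2, log (2 * sin x) * cos (2 * n * x) = -π / (4 * n) := by
  suffices ∀ n : ℕ,
      (n + 1) * ∫ x in 0..π / 2, log (2 * sin x) * cos (2 * (n + 1) * x) = -π / 4 by
    obtain ⟨k, rfl⟩ := Nat.exists_eq_succ_of_ne_zero hn
    rw [Nat.cast_succ, eq_div_iff (by positivity)]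
    linear_combination 4 * this k
  intro n
  induction n with
  | zero => simpa [neg_div] using succ_mul_integral_log_two_mul_sin_mul_cos 0
  | succ n ih => simpa [ih] using succ_mul_integral_log_two_mul_sin_mul_cos (n + 1)

-- At `n = 0` the right-hand side is `0` by the convention `0⁻¹ = 0`.
theorem fourierCoeffOn_log_two_mul_sin (n : ℤ) :
    fourierCoeffOn (neg_lt_self pi_div_two_pos) (fun x ↦ ((log (2 * sin x) : ℝ) : ℂ)) n =
      ((-(2 * |(n : ℝ)|)⁻¹ : ℝ) : ℂ) := by
  have hcos (x : ℝ) : cos (π * n / (π / 2) * x) = cos (2 * n.natAbs * x) := by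
    rw [Nat.cast_natAbs, Int.cast_abs, mul_assoc 2, ← cos_abs, ← cos_abs (2 * _)]
    congr 1
    simp only [abs_mul, abs_div, abs_abs, abs_two, abs_of_pos pi_pos]
    field_simp
  rw [fourierCoeffOn_ofReal_of_even pi_div_two_pos log_two_mul_sin_neg
    intervalIntegrable_log_two_mul_sin]
  congr 1
  simp_rw [hcos]
  rcases eq_or_ne n 0 with rfl | hn
  · simp [integral_log_two_mul_sin]
  · rw [integral_log_two_mul_sin_mul_cos (Int.natAbs_ne_zero.2 hn), Nat.cast_natAbs, Int.cast_abs]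
    field_simp
    norm_num

theorem hasSum_int_inv_four_mul_sq :
    HasSum (fun n : ℤ ↦ (4 * (n : ℝ) ^ 2)⁻¹) (π ^ 2 / 12) := by
  have hnat : HasSum (fun n : ℕ ↦ (4 * (n : ℝ) ^ 2)⁻¹) (π ^ 2 / 24) := by
    have hquarter := (hasSum_zeta_two.mul_left (1 / 4)).congr_fun
      fun n : ℕ ↦ (by ring : (4 * (n : ℝ) ^ 2)⁻¹ = 1 / 4 * (1 / (n : ℝ) ^ 2))
    rwa [show 1 / 4 * (π ^ 2 / 6) = π ^ 2 / 24 by ring] at hquarter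
  have hboth := HasSum.of_nat_of_neg (f := fun n : ℤ ↦ (4 * (n : ℝ) ^ 2)⁻¹)
    (by simpa using hnat) (by simpa using hnat)
  have hvalue : π ^ 2 / 24 + π ^ 2 / 24 - (4 * ((0 : ℤ) : ℝ) ^ 2)⁻¹ = π ^ 2 / 12 := by
    rw [Int.cast_zero]
    ring
  rwa [hvalue] at hboth

theorem integral_log_two_mul_sin_sq : ∫ x in 0..π / 2, log (2 * sin x) ^ 2 = π ^ 3 / 24 := by
  have hnorm (n : ℤ) : ‖fourierCoeffOn (neg_lt_self pi_div_two_pos)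
      (fun x ↦ ((log (2 * sin x) : ℝ) : ℂ)) n‖ ^ 2 = (4 * (n : ℝ) ^ 2)⁻¹ := by
    rw [fourierCoeffOn_log_two_mul_sin, Complex.norm_real, norm_eq_abs, sq_abs, neg_sq, inv_pow,
      mul_pow, sq_abs]
    norm_num
  have heven : ∫ x in -(π / 2)..π / 2, log (2 * sin x) ^ 2 =
      2 * ∫ x in 0..π / 2, log (2 * sin x) ^ 2 := by
    rw [integral_neg_self_eq_integral_add intervalIntegrable_log_two_mul_sin_sq,
      ← intervalIntegral.integral_const_mul]
    simp_rw [log_two_mul_sin_neg, two_mul]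
  have hparseval := hasSum_sq_fourierCoeffOn (f := fun x ↦ ((log (2 * sin x) : ℝ) : ℂ))
    (neg_lt_self pi_div_two_pos) memLp_log_two_mul_sin.ofReal
  simp only [hnorm, Complex.norm_real, norm_eq_abs, sq_abs, heven, smul_eq_mul] at hparseval
  have heq := hparseval.unique hasSum_int_inv_four_mul_sq
  field_simp at heq
  linarith

theorem integral_log_two_mul_sin_sq_le {a : ℝ} (ha0 : 0 ≤ a) (ha : a ≤ π / 2) :
    ∫ x in 0..a, log (2 * sin x) ^ 2 ≤ π ^ 3 / 24 := by
  rw [← integral_log_two_mul_sin_sq]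
  exact intervalIntegral.integral_mono_interval le_rfl ha0 ha
    (ae_of_all _ fun _ ↦ sq_nonneg _)
    (intervalIntegrable_log_two_mul_sin_sq_zero_left (by positivity) le_rfl)

theorem strictMonoOn_log_two_mul_sin :
    StrictMonoOn (fun x ↦ log (2 * sin x)) (Set.Ioc 0 (π / 2)) := by
  intro x hx y hy hxy
  have hsub : Set.Ioc 0 (π / 2) ⊆ Set.Icc (-(π / 2)) (π / 2) := fun t ht ↦
    ⟨by linarith [ht.1, pi_pos], ht.2⟩
  have hpos : 0 < sin x := sin_pos_of_pos_of_lt_pi hx.1 (by linarith [hx.2, pi_pos])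
  exact log_lt_log (by positivity) (by linarith [strictMonoOn_sin (hsub hx) (hsub hy) hxy])

theorem sum_log_sq_sin_upper (m : ℕ) (hm : 1 < m) :
    ∑ k ∈ Finset.Icc 1 (m / 2), (Real.log (2 * Real.sin (π * k / m)))^2
      < π^2 / 24 * m + (Real.log 2)^2 := by
  have hm0 : (0 : ℝ) < m := by exact_mod_cast zero_lt_one.trans hm
  have hle : π / m * (m / 2 : ℕ) ≤ π / 2 :=
    calc π / m * (m / 2 : ℕ) ≤ π / m * (m / 2) := by gcongr; exact Nat.cast_div_le
      _ = π / 2 := by field_simp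
  have hsum := sum_sq_lt_inv_mul_integral_sq_add_of_strictMonoOn (h := π / m)
    (div_pos pi_pos hm0) (Nat.div_pos hm two_pos)
    (strictMonoOn_log_two_mul_sin.mono (Set.Ioc_subset_Ioc_right hle))
    (intervalIntegrable_log_two_mul_sin_sq_zero_left (by positivity) hle)
  calc ∑ k ∈ Icc 1 (m / 2), log (2 * sin (π * k / m)) ^ 2
      = ∑ k ∈ Icc 1 (m / 2), log (2 * sin (π / m * k)) ^ 2 := by simp_rw [div_mul_eq_mul_div]
    _ < _ := hsum
    _ ≤ (π / m)⁻¹ * (π ^ 3 / 24) + log 2 ^ 2 := by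
      gcongr
      · exact integral_log_two_mul_sin_sq_le (by positivity) hle
      · exact sup_le (log_two_mul_sin_le_log_two _) (log_nonneg one_le_two)
    _ = π ^ 2 / 24 * m + log 2 ^ 2 := by field_simp
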